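/- Let F be a non-empty subset of the real line. If the Assouad dimension of F is strictly less than 1, then F does not contain arbitrarily long arithmetic progressions; that is, there exists k ∈ ℕ such that no set of the form {t + δx : x = 0, 1, ..., k-1} with δ > 0 is contained in F. -/

import Mathlib

/-!
If `F` contained a progression of `n + 1` points with gap `δ`, the ball of radius `n δ` about its
first point would contain all of it, while a set of diameter at most `δ / 2` contains at most one
of its points. Any exponent `s` admissible in the definition of the Assouad dimension therefore
satisfies `n + 1 ≤ C * (2 n) ^ s`, which fails for large `n` when `s < 1`.

Extracting an admissible `s < 1` from `assouadDim F < 1` uses that the set of admissible exponents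
is non-empty (the infimum of the empty set of reals is `0`); the exponent `1` is always admissible
on the line, by `exists_interval_cover`.
-/


open Set Metric Filter

/-- The Assouad dimension of a set in a (pseudo)metric space: the infimum of all `s ≥ 0`
for which there is a constant `C > 0` such that for all `0 < r < R` and all `x ∈ F`,
the set `B(x,R) ∩ F` can be covered by at most `C * (R/r)^s` sets of diameter at most `r`. -/
noncomputable def assouadDim {X : Type*} [PseudoMetricSpace X] (F : Set X) : ℝ :=
  sInf {s : ℝ | 0 ≤ s ∧ ∃ C : ℝ, 0 < C ∧ ∀ R : ℝ, 0 < R → ∀ r : ℝ, 0 < r → r < R →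
    ∀ x ∈ F, ∃ N : ℕ, ∃ U : Fin N → Set X,
      (Metric.closedBall x R ∩ F ⊆ ⋃ i, U i) ∧
      (∀ i, EMetric.diam (U i) ≤ ENNReal.ofReal r) ∧
      (N : ℝ) ≤ C * (R / r) ^ s}

/-- A similarity map: a bijection scaling all distances by a fixed constant `c > 0`. -/
def IsSimilarity {X : Type*} [NormedAddCommGroup X] (T : X → X) : Prop :=
  Function.Bijective T ∧ ∃ c : ℝ, 0 < c ∧ ∀ x y : X, ‖T x - T y‖ = c * ‖x - y‖

/-- `E` is a weak tangent to `F`: `E` is compact, contained in the closed unit ball, and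
there is a sequence of similarity maps `T k` with `d_H(E, T k (F) ∩ B(0,1)) → 0`. -/
def IsWeakTangent {X : Type*} [NormedAddCommGroup X] (E F : Set X) : Prop :=
  IsCompact E ∧ E ⊆ Metric.closedBall 0 1 ∧
  ∃ T : ℕ → X → X, (∀ k, IsSimilarity (T k)) ∧
    Filter.Tendsto
      (fun k => EMetric.hausdorffEdist E ((T k '' F) ∩ Metric.closedBall 0 1))
      Filter.atTop (nhds 0)

/-- The arithmetic patch of size `k`, scale `δ` and translate `t`, with respect to
the vectors `e i`. -/
def arithmeticPatch {X : Type*} [AddCommGroup X] [Module ℝ X] {d : ℕ}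
    (e : Fin d → X) (k : ℕ) (δ : ℝ) (t : X) : Set X :=
  {p | ∃ x : Fin d → ℕ, (∀ i, x i < k) ∧ p = t + δ • ∑ i, (x i : ℝ) • e i}

/-- `F` asymptotically contains arbitrarily large arithmetic patches w.r.t. the basis `e`. -/
def AsympContainsAP {X : Type*} [NormedAddCommGroup X] [Module ℝ X] {d : ℕ}
    (e : Fin d → X) (F : Set X) : Prop :=
  ∀ k : ℕ, ∀ ε : ℝ, 0 < ε → ∃ δ : ℝ, 0 < δ ∧ ∃ t : X, ∃ E : Set X, E ⊆ F ∧
    EMetric.hausdorffEdist E (arithmeticPatch e k δ t) ≤ ENNReal.ofReal (ε * δ)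

/-- `F` satisfies the asymptotic Steinhaus property. -/
def AsympSteinhaus {X : Type*} [NormedAddCommGroup X] [Module ℝ X] (F : Set X) : Prop :=
  ∀ P : Set X, P.Finite → ∀ ε : ℝ, 0 < ε → ∃ δ : ℝ, 0 < δ ∧ ∃ t : X, ∃ E : Set X, E ⊆ F ∧
    EMetric.hausdorffEdist E ((fun p => t + δ • p) '' P) ≤ ENNReal.ofReal (ε * δ)

/-- An arithmetic progression in `ℝ` of length `k`, gap `δ`, starting at `t`. -/
def arithmeticProgression (k : ℕ) (δ t : ℝ) : Set ℝ :=
  {y : ℝ | ∃ x : ℕ, x < k ∧ y = t + δ * x}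

/-- An interval of radius `R` is covered by at most `3 * (R / r)` intervals of length `r`. -/
lemma exists_interval_cover (F : Set ℝ) {R r : ℝ} (hr : 0 < r) (hrR : r < R) (x : ℝ) :
    ∃ N : ℕ, ∃ U : Fin N → Set ℝ,
      (Metric.closedBall x R ∩ F ⊆ ⋃ i, U i) ∧
      (∀ i, EMetric.diam (U i) ≤ ENNReal.ofReal r) ∧
      (N : ℝ) ≤ 3 * (R / r) ^ (1 : ℝ) := by
  have hR : 0 < R := hr.trans hrR
  refine ⟨⌊2 * R / r⌋₊ + 1,
    fun i => Set.Icc (x - R + i * r) (x - R + (i + 1) * r), ?_, ?_, ?_⟩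
  · rintro y ⟨hy, -⟩
    rw [Real.closedBall_eq_Icc] at hy
    obtain ⟨h1, h2⟩ := hy
    have h0 : 0 ≤ (y - x + R) / r := div_nonneg (by linarith) hr.le
    rw [Set.mem_iUnion]
    refine ⟨⟨⌊(y - x + R) / r⌋₊, ?_⟩, ?_, ?_⟩
    · apply Nat.lt_succ_of_le
      apply Nat.floor_le_floor
      gcongr
      linarith
    · have := (le_div_iff₀ hr).1 (Nat.floor_le h0)
      simp only
      linarith
    · have := (div_lt_iff₀ hr).1 (Nat.lt_floor_add_one ((y - x + R) / r))
      simp only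
      linarith
  · intro i
    apply (Real.ediam_Icc _ _).le.trans
    apply ENNReal.ofReal_le_ofReal
    linarith
  · have h1 : (⌊2 * R / r⌋₊ : ℝ) ≤ 2 * R / r := Nat.floor_le (by positivity)
    have h2 : 1 < R / r := (one_lt_div hr).2 hrR
    have h3 : 2 * R / r = 2 * (R / r) := by ring
    rw [Real.rpow_one]
    push_cast
    linarith

/-- A cover of a progression with gap `δ` by sets of diameter at most `δ / 2` has at least as many
members as the progression, since no member contains two of its points. -/
lemma length_le_of_cover {k N : ℕ} {δ t : ℝ} (hδ : 0 < δ) (U : Fin N → Set ℝ)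
    (hU : arithmeticProgression k δ t ⊆ ⋃ i, U i)
    (hd : ∀ i, EMetric.diam (U i) ≤ ENNReal.ofReal (δ / 2)) : k ≤ N := by
  have hmem : ∀ j : Fin k, ∃ i, t + δ * (j : ℕ) ∈ U i := fun j =>
    Set.mem_iUnion.1 (hU ⟨j, j.2, rfl⟩)
  choose f hf using hmem
  have hinj : Function.Injective f := by
    intro a b hab
    by_contra hne
    have ha := hf a
    rw [hab] at ha
    have h1 := (Metric.edist_le_ediam_of_mem ha (hf b)).trans (hd (f b))
    rw [edist_dist, ENNReal.ofReal_le_ofReal_iff (by positivity), Real.dist_eq] at h1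
    have h2 : t + δ * ((a : ℕ) : ℝ) - (t + δ * ((b : ℕ) : ℝ))
        = δ * (((a : ℕ) : ℤ) - ((b : ℕ) : ℤ) : ℤ) := by
      push_cast; ring
    rw [h2, abs_mul, abs_of_pos hδ, ← Int.cast_abs] at h1
    have h3 : (1 : ℤ) ≤ |((a : ℕ) : ℤ) - ((b : ℕ) : ℤ)| := by
      apply Int.one_le_abs
      intro h
      exact hne (Fin.ext (by omega))
    have h4 : (1 : ℝ) ≤ (|((a : ℕ) : ℤ) - ((b : ℕ) : ℤ)| : ℤ) := by exact_mod_cast h3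
    nlinarith
  simpa using Fintype.card_le_of_injective f hinj

/-- If `F ⊆ ℝ` is non-empty and has Assouad dimension strictly less than 1, then `F`
does not contain arbitrarily long arithmetic progressions. -/
theorem assouad_lt_one_no_arbitrarily_long_APs (F : Set ℝ) (hF : F.Nonempty)
    (h : assouadDim F < 1) :
    ∃ k : ℕ, ∀ δ : ℝ, 0 < δ → ∀ t : ℝ, ¬ (arithmeticProgression k δ t ⊆ F) := by
  obtain ⟨s, ⟨-, C, hC, hcov⟩, hs1⟩ := exists_lt_of_csInf_lt
    (by exact ⟨1, zero_le_one, 3, by norm_num,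
      fun R _ r hr hrR x _ => exists_interval_cover F hr hrR x⟩) h
  -- `n` is chosen so large that `C * (2 * n) ^ s < n`.
  have hlim : Tendsto (fun n : ℕ => (2 * (n : ℝ)) ^ (1 - s)) atTop atTop :=
    (tendsto_rpow_atTop (by linarith)).comp
      (tendsto_natCast_atTop_atTop.const_mul_atTop two_pos)
  obtain ⟨n, hn, hn1⟩ :=
    ((hlim.eventually_gt_atTop (2 * C)).and (eventually_ge_atTop 1)).exists
  have hn0 : (1 : ℝ) ≤ n := by exact_mod_cast hn1
  refine ⟨n + 1, fun δ hδ t hsub => ?_⟩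
  obtain ⟨N, U, hU, hd, hN⟩ := hcov (n * δ) (by positivity) (δ / 2) (by positivity)
    (by nlinarith) t (hsub ⟨0, by omega, by simp⟩)
  have hball : arithmeticProgression (n + 1) δ t ⊆ Metric.closedBall t (n * δ) ∩ F := by
    refine fun y hy => ⟨?_, hsub hy⟩
    obtain ⟨j, hj, rfl⟩ := hy
    have hj' : (j : ℝ) ≤ n := by exact_mod_cast Nat.lt_succ_iff.1 hj
    rw [Metric.mem_closedBall, Real.dist_eq, add_sub_cancel_left, abs_of_nonneg (by positivity)]
    nlinarith
  have hle : ((n + 1 : ℕ) : ℝ) ≤ N := by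
    exact_mod_cast length_le_of_cover hδ U (hball.trans hU) hd
  have hq : n * δ / (δ / 2) = 2 * (n : ℝ) := by field_simp
  rw [hq] at hN
  have hpos : 0 < (2 * (n : ℝ)) ^ s := by positivity
  have hmul : (2 * (n : ℝ)) ^ (1 - s) * (2 * (n : ℝ)) ^ s = 2 * n := by
    rw [← Real.rpow_add (by positivity), sub_add_cancel, Real.rpow_one]
  have := mul_lt_mul_of_pos_right hn hpos
  push_cast at hle
  nlinarith
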